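/- Let ℓ ≥ 1 and let (x_t)_{t∈ℕ} be a sequence in ℝ^d generated by an order-ℓ stationary first-order method, and let K ≥ 2 be an integer. Then the score s_K = Σ_{t=0}^{ℓ−1} ‖x_t − x_{t+K}‖² equals 0 if and only if x_{t+K} = x_t for all t ∈ ℕ. -/

import Mathlib

/-!
The update rule of a stationary method does not depend on time, so the shifted sequence
`t ↦ x (t + K)` is generated by the same rule as `x`, and a sequence generated by a rule of
order `ℓ` is determined by its first `ℓ` terms. The score vanishes exactly when `x` and its shift
agree on these terms.
-/

/-- The sequence `x` solves the autonomous recurrence of order `ℓ` with update rule `F`. The window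
passed to `F` lists the most recent term first; as `s < ℓ ≤ t`, the subtractions never truncate.
A first-order method with oracle `O` and update map `A` is the case
`F w = A (fun s => (w s, O (w s)))`. -/
def IsRecurrenceSolution {α : Type*} {ℓ : ℕ} (F : (Fin ℓ → α) → α) (x : ℕ → α) : Prop :=
  ∀ t, ℓ ≤ t → x t = F fun s => x (t - (s : ℕ) - 1)

namespace IsRecurrenceSolution

variable {α : Type*} {ℓ : ℕ} {F : (Fin ℓ → α) → α} {x y : ℕ → α}

theorem comp_add_right (hx : IsRecurrenceSolution F x) (K : ℕ) :
    IsRecurrenceSolution F fun t => x (t + K) := by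
  intro t ht
  have window_shift (s : Fin ℓ) : t + K - (s : ℕ) - 1 = t - (s : ℕ) - 1 + K := by omega
  simpa only [window_shift] using hx (t + K) (Nat.le_add_right_of_le ht)

theorem eq_of_eq_init (hx : IsRecurrenceSolution F x) (hy : IsRecurrenceSolution F y)
    (init : ∀ t < ℓ, x t = y t) : x = y := by
  funext t
  induction t using Nat.strong_induction_on with
  | _ t ih =>
    obtain ht | ht := lt_or_ge t ℓ
    · exact init t ht
    · have window_eq (s : Fin ℓ) : x (t - (s : ℕ) - 1) = y (t - (s : ℕ) - 1) :=
        ih _ (by omega)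
      rw [hx t ht, hy t ht, funext window_eq]

theorem periodic_iff (hx : IsRecurrenceSolution F x) (K : ℕ) :
    Function.Periodic x K ↔ ∀ t < ℓ, x t = x (t + K) :=
  ⟨fun h t _ => (h t).symm,
    fun init t => (congrFun (hx.eq_of_eq_init (hx.comp_add_right K) init) t).symm⟩

end IsRecurrenceSolution

theorem sum_norm_sub_sq_eq_zero_iff {ι E : Type*} [NormedAddGroup E] {s : Finset ι} {f g : ι → E} :
    ∑ i ∈ s, ‖f i - g i‖ ^ 2 = 0 ↔ ∀ i ∈ s, f i = g i := by
  simp only [Finset.sum_eq_zero_iff_of_nonneg fun _ _ => sq_nonneg _, sq_eq_zero_iff,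
    norm_eq_zero, sub_eq_zero]

theorem sfom_score_eq_zero_iff_cycle_general {X Y : Type*} [NormedAddGroup X] {ℓ : ℕ}
    (O : X → Y) (A : (Fin ℓ → X × Y) → X) (x : ℕ → X)
    (hx : ∀ t, ℓ ≤ t →
      x t = A (fun s => (x (t - (s : ℕ) - 1), O (x (t - (s : ℕ) - 1)))))
    (K : ℕ) :
    ∑ t ∈ Finset.range ℓ, ‖x t - x (t + K)‖ ^ 2 = 0 ↔ ∀ t, x (t + K) = x t := by
  have solution : IsRecurrenceSolution (fun w => A fun s => (w s, O (w s))) x := hx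
  calc ∑ t ∈ Finset.range ℓ, ‖x t - x (t + K)‖ ^ 2 = 0
    _ ↔ ∀ t < ℓ, x t = x (t + K) := by
      simp only [sum_norm_sub_sq_eq_zero_iff, Finset.mem_range]
    _ ↔ ∀ t, x (t + K) = x t := (solution.periodic_iff K).symm

/-- For a sequence in `ℝ^d` generated by an order-`ℓ` stationary
first-order method and an integer `K ≥ 2`, the score
`s_K = ∑_{t=0}^{ℓ-1} ‖x t - x (t+K)‖²` vanishes iff the sequence is `K`-periodic. -/
theorem sfom_score_eq_zero_iff_cycle {d : ℕ} {Y : Type*} (ℓ : ℕ) (hℓ : 1 ≤ ℓ)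
    (O : EuclideanSpace ℝ (Fin d) → Y)
    (A : (Fin ℓ → EuclideanSpace ℝ (Fin d) × Y) → EuclideanSpace ℝ (Fin d))
    (x : ℕ → EuclideanSpace ℝ (Fin d))
    (hx : ∀ t, ℓ ≤ t →
      x t = A (fun s => (x (t - (s : ℕ) - 1), O (x (t - (s : ℕ) - 1)))))
    (K : ℕ) (hK : 2 ≤ K) :
    ∑ t ∈ Finset.range ℓ, ‖x t - x (t + K)‖ ^ 2 = 0 ↔ ∀ t, x (t + K) = x t :=
  sfom_score_eq_zero_iff_cycle_general O A x hx K
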